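/- arXiv:math/0005042 — 2 statements merged into one kernel-verified Lean document; each statement's English description precedes it below -/
import Mathlib

section
/- Suppose α : g → Der(h) is 𝕜-linear and ρ : g × g → h is alternating bilinear with ad_{ρ(X,Y)} = ⁅α_X, α_Y⁆ − α_{⁅X,Y⁆} for all X, Y ∈ g, and let λ(X,Y,Z) = α_X(ρ(Y,Z)) + α_Y(ρ(Z,X)) + α_Z(ρ(X,Y)) − ρ(⁅X,Y⁆,Z) − ρ(⁅Y,Z⁆,X) − ρ(⁅Z,X⁆,Y). Then λ is a 3-cocycle: for all X₀, X₁, X₂, X₃ ∈ g, α_{X₀}(λ(X₁,X₂,X₃)) − α_{X₁}(λ(X₀,X₂,X₃)) + α_{X₂}(λ(X₀,X₁,X₃)) − α_{X₃}(λ(X₀,X₁,X₂)) − λ(⁅X₀,X₁⁆,X₂,X₃) + λ(⁅X₀,X₂⁆,X₁,X₃) − λ(⁅X₀,X₃⁆,X₁,X₂) − λ(⁅X₁,X₂⁆,X₀,X₃) + λ(⁅X₁,X₃⁆,X₀,X₂) − λ(⁅X₂,X₃⁆,X₀,X₁) = 0. -/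
/-- The 3-cochain `λ(α,ρ)` of a pair `(α, ρ)`:
`λ X Y Z = α X (ρ Y Z) + α Y (ρ Z X) + α Z (ρ X Y)
- ρ ⁅X,Y⁆ Z - ρ ⁅Y,Z⁆ X - ρ ⁅Z,X⁆ Y`. -/
def lambdaCochain {𝕜 : Type*} [Field 𝕜] {h g : Type*} [LieRing h] [LieAlgebra 𝕜 h]
    [LieRing g] [LieAlgebra 𝕜 g] (α : g →ₗ[𝕜] LieDerivation 𝕜 h h)
    (ρ : g →ₗ[𝕜] g →ₗ[𝕜] h) (X Y Z : g) : h :=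
  α X (ρ Y Z) + α Y (ρ Z X) + α Z (ρ X Y)
    - ρ ⁅X, Y⁆ Z - ρ ⁅Y, Z⁆ X - ρ ⁅Z, X⁆ Y

/-!
The cochain `λ` is the Chevalley coboundary `dρ` taken with respect to `α`. As `α` need not be a
Lie algebra homomorphism, `d ∘ d` need not vanish: writing `F(X, Y) = ⁅α X, α Y⁆ - α ⁅X, Y⁆` for the
curvature of `α`, one has `d (d ω) = F ∧ ω`. Indeed, the terms of `d (d ω)` free of `α` form the
double coboundary for `α = 0`, which vanishes by the Jacobi identity; the terms linear in `α` that
come from `α X (ω ⁅Y, Z⁆ W)` cancel, and the others assemble into `F ∧ ω`. Here `F = ad ∘ ρ`, so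
`dλ = ⁅ρ ∧ ρ⁆`, which vanishes because 2-forms commute under `∧` while the bracket is antisymmetric.
-/

section Coboundary

variable {R g V : Type*} [CommRing R] [LieRing g] [LieAlgebra R g] [AddCommGroup V] [Module R V]

/-- The curvature of a linear map `α : g → End V`, that is, its failure to be a representation
of `g`. -/
def curvature (α : g →ₗ[R] Module.End R V) (X Y : g) : Module.End R V :=
  ⁅α X, α Y⁆ - α ⁅X, Y⁆

/-- The Chevalley coboundary of a `V`-valued 2-cochain `ω` on `g`, with respect to a linear map
`α : g → End V` that is not required to be a representation. -/
def coboundaryTwo (α : g →ₗ[R] Module.End R V) (ω : g →ₗ[R] g →ₗ[R] V) (X Y Z : g) : V :=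
  α X (ω Y Z) - α Y (ω X Z) + α Z (ω X Y) - ω ⁅X, Y⁆ Z + ω ⁅X, Z⁆ Y - ω ⁅Y, Z⁆ X

/-- The Chevalley coboundary of a `V`-valued 3-cochain `c` on `g`, with respect to a linear map
`α : g → End V` that is not required to be a representation. The cochain is a bare function, so
that `coboundaryTwo α ω` can be substituted directly. -/
def coboundaryThree (α : g →ₗ[R] Module.End R V) (c : g → g → g → V) (X₀ X₁ X₂ X₃ : g) : V :=
  α X₀ (c X₁ X₂ X₃) - α X₁ (c X₀ X₂ X₃) + α X₂ (c X₀ X₁ X₃) - α X₃ (c X₀ X₁ X₂)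
    - c ⁅X₀, X₁⁆ X₂ X₃ + c ⁅X₀, X₂⁆ X₁ X₃ - c ⁅X₀, X₃⁆ X₁ X₂
    - c ⁅X₁, X₂⁆ X₀ X₃ + c ⁅X₁, X₃⁆ X₀ X₂ - c ⁅X₂, X₃⁆ X₀ X₁

lemma curvature_apply (α : g →ₗ[R] Module.End R V) (X Y : g) (v : V) :
    curvature α X Y v = α X (α Y v) - α Y (α X v) - α ⁅X, Y⁆ v :=
  rfl

lemma lie_lie_sub_lie_lie_add_lie_lie {L : Type*} [LieRing L] (X Y Z : L) :
    ⁅⁅X, Y⁆, Z⁆ - ⁅⁅X, Z⁆, Y⁆ + ⁅⁅Y, Z⁆, X⁆ = 0 := by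
  rw [lie_lie X Y Z, ← lie_skew X ⁅Y, Z⁆, ← lie_skew Y ⁅X, Z⁆]
  abel

lemma coboundaryThree_zero_coboundaryTwo_zero {ω : g →ₗ[R] g →ₗ[R] V} (hω : ω.IsAlt)
    (X₀ X₁ X₂ X₃ : g) :
    coboundaryThree (0 : g →ₗ[R] Module.End R V) (coboundaryTwo 0 ω) X₀ X₁ X₂ X₃ = 0 := by
  have jacobi (X Y Z W : g) : ω ⁅⁅X, Y⁆, Z⁆ W - ω ⁅⁅X, Z⁆, Y⁆ W + ω ⁅⁅Y, Z⁆, X⁆ W = 0 := by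
    simpa using congr(ω $(lie_lie_sub_lie_lie_add_lie_lie X Y Z) W)
  simp only [coboundaryThree, coboundaryTwo, LinearMap.zero_apply]
  linear_combination (norm := module)
    jacobi X₀ X₁ X₂ X₃ - jacobi X₀ X₁ X₃ X₂ + jacobi X₀ X₂ X₃ X₁ - jacobi X₁ X₂ X₃ X₀
      - hω.neg ⁅X₀, X₁⁆ ⁅X₂, X₃⁆ + hω.neg ⁅X₀, X₂⁆ ⁅X₁, X₃⁆ - hω.neg ⁅X₀, X₃⁆ ⁅X₁, X₂⁆

theorem coboundaryThree_coboundaryTwo (α : g →ₗ[R] Module.End R V) {ω : g →ₗ[R] g →ₗ[R] V}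
    (hω : ω.IsAlt) (X₀ X₁ X₂ X₃ : g) :
    coboundaryThree α (coboundaryTwo α ω) X₀ X₁ X₂ X₃ =
      curvature α X₀ X₁ (ω X₂ X₃) - curvature α X₀ X₂ (ω X₁ X₃) + curvature α X₀ X₃ (ω X₁ X₂)
        + curvature α X₁ X₂ (ω X₀ X₃) - curvature α X₁ X₃ (ω X₀ X₂)
        + curvature α X₂ X₃ (ω X₀ X₁) := by
  have trivial_part := coboundaryThree_zero_coboundaryTwo_zero hω X₀ X₁ X₂ X₃
  simp only [coboundaryThree, coboundaryTwo, LinearMap.zero_apply] at trivial_part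
  simp only [coboundaryThree, coboundaryTwo, curvature_apply, map_add, map_sub]
  linear_combination (norm := module) trivial_part

end Coboundary

theorem statement11_general {R h g : Type*} [CommRing R] [LieRing h] [LieAlgebra R h]
    [LieRing g] [LieAlgebra R g] (α : g →ₗ[R] Module.End R h) {ρ : g →ₗ[R] g →ₗ[R] h}
    (hρ : ρ.IsAlt) (hcurv : ∀ X Y : g, LieAlgebra.ad R h (ρ X Y) = curvature α X Y)
    (X₀ X₁ X₂ X₃ : g) :
    coboundaryThree α (coboundaryTwo α ρ) X₀ X₁ X₂ X₃ = 0 := by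
  rw [coboundaryThree_coboundaryTwo α hρ]
  simp only [← hcurv, LieAlgebra.ad_apply]
  rw [← lie_skew (ρ X₂ X₃) (ρ X₀ X₁), ← lie_skew (ρ X₁ X₃) (ρ X₀ X₂),
    ← lie_skew (ρ X₁ X₂) (ρ X₀ X₃)]
  abel

section Derivations

variable {R h g : Type*} [CommRing R] [LieRing h] [LieAlgebra R h] [LieRing g] [LieAlgebra R g]

/-- A linear map `α : g → Der h` regarded as a linear map `g → End h`, so that its curvature and
its coboundaries are defined. -/
def derivationAction (α : g →ₗ[R] LieDerivation R h h) : g →ₗ[R] Module.End R h :=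
  (LieDerivation.toLinearMapLieHom R h : LieDerivation R h h →ₗ[R] Module.End R h) ∘ₗ α

lemma derivationAction_apply (α : g →ₗ[R] LieDerivation R h h) (X : g) (v : h) :
    derivationAction α X v = α X v :=
  rfl

lemma ad_eq_curvature_derivationAction {α : g →ₗ[R] LieDerivation R h h} {X Y : g} {v : h}
    (hv : LieDerivation.ad R h v = ⁅α X, α Y⁆ - α ⁅X, Y⁆) :
    LieAlgebra.ad R h v = curvature (derivationAction α) X Y := by
  ext w
  simpa only [curvature_apply, derivationAction_apply, LieAlgebra.ad_apply,
    LieDerivation.ad_apply_apply, LieDerivation.sub_apply, LieDerivation.lie_apply]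
    using congr($hv w)

end Derivations

lemma lambdaCochain_eq_coboundaryTwo {𝕜 h g : Type*} [Field 𝕜] [LieRing h] [LieAlgebra 𝕜 h]
    [LieRing g] [LieAlgebra 𝕜 g] (α : g →ₗ[𝕜] LieDerivation 𝕜 h h) {ρ : g →ₗ[𝕜] g →ₗ[𝕜] h}
    (hρ : ρ.IsAlt) : lambdaCochain α ρ = coboundaryTwo (derivationAction α) ρ := by
  funext X Y Z
  simp only [lambdaCochain, coboundaryTwo, derivationAction_apply]
  rw [← hρ.neg X Z, ← lie_skew Z X]
  simp only [map_neg, LinearMap.neg_apply]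
  abel

/-- Suppose `α : g → Der(h)` is `𝕜`-linear and `ρ : g × g → h` is
alternating bilinear with `ad_(ρ X Y) = ⁅α X, α Y⁆ - α ⁅X,Y⁆` for all `X, Y ∈ g`.
Then `λ = λ(α,ρ)` is a 3-cocycle: its Chevalley coboundary with respect to the
action `α` vanishes. -/
theorem statement11 {𝕜 : Type*} [Field 𝕜] {h g : Type*} [LieRing h] [LieAlgebra 𝕜 h]
    [LieRing g] [LieAlgebra 𝕜 g] (α : g →ₗ[𝕜] LieDerivation 𝕜 h h)
    (ρ : g →ₗ[𝕜] g →ₗ[𝕜] h) (halt : ∀ X : g, ρ X X = 0)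
    (h53 : ∀ X Y : g, LieDerivation.ad 𝕜 h (ρ X Y) = ⁅α X, α Y⁆ - α ⁅X, Y⁆) :
    ∀ X₀ X₁ X₂ X₃ : g,
      α X₀ (lambdaCochain α ρ X₁ X₂ X₃) - α X₁ (lambdaCochain α ρ X₀ X₂ X₃)
          + α X₂ (lambdaCochain α ρ X₀ X₁ X₃) - α X₃ (lambdaCochain α ρ X₀ X₁ X₂)
          - lambdaCochain α ρ ⁅X₀, X₁⁆ X₂ X₃ + lambdaCochain α ρ ⁅X₀, X₂⁆ X₁ X₃
          - lambdaCochain α ρ ⁅X₀, X₃⁆ X₁ X₂ - lambdaCochain α ρ ⁅X₁, X₂⁆ X₀ X₃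
          + lambdaCochain α ρ ⁅X₁, X₃⁆ X₀ X₂ - lambdaCochain α ρ ⁅X₂, X₃⁆ X₀ X₁ = 0 := by
  rw [lambdaCochain_eq_coboundaryTwo α halt]
  exact statement11_general (derivationAction α) halt fun X Y ↦
    ad_eq_curvature_derivationAction (h53 X Y)
end

section
/- Suppose α : g → Der(h) is 𝕜-linear and ρ : g × g → h is alternating bilinear with ad_{ρ(X,Y)} = ⁅α_X, α_Y⁆ − α_{⁅X,Y⁆} for all X, Y. Given a 𝕜-linear map b : g → h, set α'_X = α_X + ad_{b(X)} and ρ'(X,Y) = ρ(X,Y) + α_X(b(Y)) − α_Y(b(X)) − b(⁅X,Y⁆) + ⁅b(X), b(Y)⁆. Then ad_{ρ'(X,Y)} = ⁅α'_X, α'_Y⁆ − α'_{⁅X,Y⁆} for all X, Y, and the associated 3-cochains coincide exactly: λ(α',ρ')(X,Y,Z) = λ(α,ρ)(X,Y,Z) for all X, Y, Z ∈ g. -/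
/-- The 3-cochain `λ(α,ρ)` of a pair `(α, ρ)` (maps taken unbundled):
`λ X Y Z = α X (ρ Y Z) + α Y (ρ Z X) + α Z (ρ X Y)
- ρ ⁅X,Y⁆ Z - ρ ⁅Y,Z⁆ X - ρ ⁅Z,X⁆ Y`. -/
def lambdaCochainF {𝕜 : Type*} [Field 𝕜] {h g : Type*} [LieRing h] [LieAlgebra 𝕜 h]
    [LieRing g] [LieAlgebra 𝕜 g] (α : g → LieDerivation 𝕜 h h)
    (ρ : g → g → h) (X Y Z : g) : h :=
  α X (ρ Y Z) + α Y (ρ Z X) + α Z (ρ X Y)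
    - ρ ⁅X, Y⁆ Z - ρ ⁅Y, Z⁆ X - ρ ⁅Z, X⁆ Y

/-!
Read `α` as a connection with covariant differential `d` and `ρ` as a lift of its curvature through
`ad`, so that `λ(α,ρ) = dρ`. The modified pair is the gauge transform `α' = α + ad ∘ b`,
`ρ' = ρ + db + ½[b ∧ b]`, and
`λ(α',ρ') = dρ + d²b + d(½[b ∧ b]) + [b ∧ ρ] + [b ∧ db] + [b ∧ ½[b ∧ b]]`.
Since `d²` is the action of the curvature, `d²b = -[b ∧ ρ]`; the Leibniz rule gives
`d(½[b ∧ b]) = -[b ∧ db]`; and the last term vanishes by the Jacobi identity.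
-/

section Wedge

variable {g h : Type*} [LieRing h]

/-- The wedge product `[b ∧ ρ]` of an `h`-valued 1-cochain with an alternating `h`-valued
2-cochain, written as a cyclic sum. -/
def lieWedge (b : g → h) (ρ : g → g → h) (X Y Z : g) : h :=
  ⁅b X, ρ Y Z⁆ + ⁅b Y, ρ Z X⁆ + ⁅b Z, ρ X Y⁆

/-- The 2-cochain `½[b ∧ b]` of an `h`-valued 1-cochain `b`; in this form it needs no division
by `2`. -/
def lieSquare (b : g → h) (X Y : g) : h :=
  ⁅b X, b Y⁆

lemma lieWedge_add (b : g → h) (ρ σ : g → g → h) :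
    lieWedge b (ρ + σ) = lieWedge b ρ + lieWedge b σ := by
  ext X Y Z
  simp only [lieWedge, Pi.add_apply, lie_add]
  abel

lemma lieWedge_lieSquare (b : g → h) : lieWedge b (lieSquare b) = 0 := by
  ext X Y Z
  exact lie_jacobi (b X) (b Y) (b Z)

end Wedge

section Curvature

variable {R g h : Type*} [CommRing R] [LieRing h] [LieAlgebra R h] [LieRing g]

/-- The covariant differential `db` of a 1-cochain `b` with respect to the connection `α`. -/
def covariantDifferential (α : g → LieDerivation R h h) (b : g → h) (X Y : g) : h :=
  α X (b Y) - α Y (b X) - b ⁅X, Y⁆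

/-- The 2-cochain `ρ` lifts the curvature of the connection `α` along `ad : h → Der(h)`. -/
def IsCurvatureLift (α : g → LieDerivation R h h) (ρ : g → g → h) : Prop :=
  ∀ X Y, LieDerivation.ad R h (ρ X Y) = ⁅α X, α Y⁆ - α ⁅X, Y⁆

/-- The gauge transform `α + ad ∘ b` of the connection `α` by the 1-cochain `b`. -/
def gaugeConnection (α : g → LieDerivation R h h) (b : g → h) (X : g) : LieDerivation R h h :=
  α X + LieDerivation.ad R h (b X)

/-- The gauge transform `ρ + db + ½[b ∧ b]` by the 1-cochain `b` of a lift `ρ` of the curvature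
of `α`. -/
def gaugeCurvature (α : g → LieDerivation R h h) (ρ : g → g → h) (b : g → h) : g → g → h :=
  ρ + covariantDifferential α b + lieSquare b

lemma gaugeCurvature_apply (α : g → LieDerivation R h h) (ρ : g → g → h) (b : g → h) (X Y : g) :
    gaugeCurvature α ρ b X Y = ρ X Y + α X (b Y) - α Y (b X) - b ⁅X, Y⁆ + ⁅b X, b Y⁆ := by
  simp only [gaugeCurvature, covariantDifferential, lieSquare, Pi.add_apply]
  abel

lemma ad_covariantDifferential (α : g → LieDerivation R h h) (b : g → h) (X Y : g) :
    LieDerivation.ad R h (covariantDifferential α b X Y) =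
      ⁅α X, LieDerivation.ad R h (b Y)⁆ + ⁅LieDerivation.ad R h (b X), α Y⁆
        - LieDerivation.ad R h (b ⁅X, Y⁆) := by
  rw [covariantDifferential, map_sub, map_sub, ← LieDerivation.lie_der_ad_eq_ad_der,
    ← LieDerivation.lie_der_ad_eq_ad_der, ← lie_skew _ (α Y), sub_eq_add_neg ⁅α X, _⁆]

namespace IsCurvatureLift

variable {α : g → LieDerivation R h h} {ρ : g → g → h}

lemma lie_apply (hρ : IsCurvatureLift α ρ) (X Y : g) (H : h) :
    ⁅ρ X Y, H⁆ = α X (α Y H) - α Y (α X H) - α ⁅X, Y⁆ H := by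
  rw [← LieDerivation.ad_apply_apply R, hρ, LieDerivation.sub_apply, LieDerivation.lie_apply]

lemma gauge (hρ : IsCurvatureLift α ρ) (b : g → h) :
    IsCurvatureLift (gaugeConnection α b) (gaugeCurvature α ρ b) := by
  intro X Y
  simp only [gaugeCurvature, gaugeConnection, lieSquare, Pi.add_apply, map_add, hρ X Y,
    ad_covariantDifferential, LieHom.map_lie, add_lie, lie_add]
  abel

end IsCurvatureLift

end Curvature

section Cochain

variable {𝕜 g h : Type*} [Field 𝕜] [LieRing h] [LieAlgebra 𝕜 h] [LieRing g] [LieAlgebra 𝕜 g]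

lemma lambdaCochainF_add (α : g → LieDerivation 𝕜 h h) (ρ σ : g → g → h) :
    lambdaCochainF α (ρ + σ) = lambdaCochainF α ρ + lambdaCochainF α σ := by
  ext X Y Z
  simp only [lambdaCochainF, Pi.add_apply, map_add]
  abel

lemma lambdaCochainF_gaugeConnection (α : g → LieDerivation 𝕜 h h) (b : g → h)
    (ρ : g → g → h) :
    lambdaCochainF (gaugeConnection α b) ρ = lambdaCochainF α ρ + lieWedge b ρ := by
  ext X Y Z
  simp only [lambdaCochainF, gaugeConnection, lieWedge, LieDerivation.add_apply,
    LieDerivation.ad_apply_apply, Pi.add_apply]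
  abel

lemma lambdaCochainF_covariantDifferential {α : g → LieDerivation 𝕜 h h} {ρ : g → g → h}
    (hρ : IsCurvatureLift α ρ) (b : g →+ h) :
    lambdaCochainF α (covariantDifferential α b) = -lieWedge b ρ := by
  ext X Y Z
  have curvature (U V W : g) :
      ⁅b W, ρ U V⁆ = -(α U (α V (b W)) - α V (α U (b W)) - α ⁅U, V⁆ (b W)) := by
    rw [← hρ.lie_apply, lie_skew]
  have jacobi : b ⁅⁅X, Y⁆, Z⁆ = -b ⁅⁅Y, Z⁆, X⁆ - b ⁅⁅Z, X⁆, Y⁆ := by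
    rw [← map_neg, ← map_sub, lie_skew, ← lie_skew Z X, neg_lie, lie_skew, ← lie_lie]
  simp only [lambdaCochainF, covariantDifferential, lieWedge, Pi.neg_apply, map_sub, curvature,
    jacobi]
  abel

lemma lambdaCochainF_lieSquare (α : g → LieDerivation 𝕜 h h) (b : g → h) :
    lambdaCochainF α (lieSquare b) = -lieWedge b (covariantDifferential α b) := by
  ext X Y Z
  simp only [lambdaCochainF, covariantDifferential, lieSquare, lieWedge, Pi.neg_apply,
    LieDerivation.apply_lie_eq_sub, lie_sub, ← lie_skew (b ⁅_, _⁆)]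
  abel

theorem lambdaCochainF_gauge {α : g → LieDerivation 𝕜 h h} {ρ : g → g → h}
    (hρ : IsCurvatureLift α ρ) (b : g →+ h) :
    lambdaCochainF (gaugeConnection α b) (gaugeCurvature α ρ b) = lambdaCochainF α ρ := by
  rw [lambdaCochainF_gaugeConnection, gaugeCurvature]
  simp only [lambdaCochainF_add, lieWedge_add, lambdaCochainF_covariantDifferential hρ,
    lambdaCochainF_lieSquare, lieWedge_lieSquare]
  abel

theorem statement12_general (α : g → LieDerivation 𝕜 h h) (ρ : g → g → h)
    (hρ : ∀ X Y : g, LieDerivation.ad 𝕜 h (ρ X Y) = ⁅α X, α Y⁆ - α ⁅X, Y⁆) (b : g →+ h) :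
    let α' : g → LieDerivation 𝕜 h h := fun X => α X + LieDerivation.ad 𝕜 h (b X)
    let ρ' : g → g → h := fun X Y =>
      ρ X Y + α X (b Y) - α Y (b X) - b ⁅X, Y⁆ + ⁅b X, b Y⁆
    (∀ X Y : g, LieDerivation.ad 𝕜 h (ρ' X Y) = ⁅α' X, α' Y⁆ - α' ⁅X, Y⁆) ∧
      ∀ X Y Z : g, lambdaCochainF α' ρ' X Y Z = lambdaCochainF α ρ X Y Z := by
  intro α' ρ'
  have hα' : α' = gaugeConnection α b := rfl
  have hρ' : ρ' = gaugeCurvature α ρ b := by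
    ext X Y
    exact (gaugeCurvature_apply α ρ b X Y).symm
  rw [hα', hρ', lambdaCochainF_gauge hρ]
  exact ⟨IsCurvatureLift.gauge hρ b, fun _ _ _ => rfl⟩

end Cochain

/-- Suppose `α : g → Der(h)` is `𝕜`-linear and `ρ : g × g → h` is
alternating bilinear with `ad_(ρ X Y) = ⁅α X, α Y⁆ - α ⁅X,Y⁆`.  Given a `𝕜`-linear
map `b : g → h`, set `α'_X = α_X + ad_(b X)` and
`ρ' X Y = ρ X Y + α X (b Y) - α Y (b X) - b ⁅X,Y⁆ + ⁅b X, b Y⁆`.  Then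
`ad_(ρ' X Y) = ⁅α' X, α' Y⁆ - α' ⁅X,Y⁆` for all `X, Y`, and the associated
3-cochains coincide exactly: `λ(α',ρ') = λ(α,ρ)`. -/
theorem statement12 {𝕜 : Type*} [Field 𝕜] {h g : Type*} [LieRing h] [LieAlgebra 𝕜 h]
    [LieRing g] [LieAlgebra 𝕜 g] (α : g →ₗ[𝕜] LieDerivation 𝕜 h h)
    (ρ : g →ₗ[𝕜] g →ₗ[𝕜] h) (halt : ∀ X : g, ρ X X = 0)
    (h53 : ∀ X Y : g, LieDerivation.ad 𝕜 h (ρ X Y) = ⁅α X, α Y⁆ - α ⁅X, Y⁆)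
    (b : g →ₗ[𝕜] h) :
    let α' : g → LieDerivation 𝕜 h h := fun X => α X + LieDerivation.ad 𝕜 h (b X)
    let ρ' : g → g → h := fun X Y =>
      ρ X Y + α X (b Y) - α Y (b X) - b ⁅X, Y⁆ + ⁅b X, b Y⁆
    (∀ X Y : g, LieDerivation.ad 𝕜 h (ρ' X Y) = ⁅α' X, α' Y⁆ - α' ⁅X, Y⁆) ∧
    (∀ X Y Z : g,
      lambdaCochainF α' ρ' X Y Z
        = lambdaCochainF (fun X => α X) (fun X Y => ρ X Y) X Y Z) :=
  statement12_general α (fun X Y => ρ X Y) h53 b.toAddMonoidHom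
end
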